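/- arXiv:1607.05342 — 6 statements merged into one kernel-verified Lean document; each statement's English description precedes it below -/
import Mathlib

section
/- Let ψ be a CNF formula with n variables and m clauses in which every clause consists of exactly 3 distinct literals (i.e., each C r : Finset (Fin n × Bool) has cardinality 3). Then there exist a matrix A : Fin (2m+n) → Fin (2n+2m) → ℕ all of whose entries lie in {0, 1} and a vector b : Fin (2m+n) → ℕ all of whose entries are at most 3, such that: (i) ψ is satisfiable if and only if there exists x : Fin (2n+2m) → ℕ with ∑_j A i j * x j = b i for every i; and (ii) every x : Fin (2n+2m) → ℕ satisfying ∑_j A i j * x j = b i for every i has all entries at most 2, i.e., x j ≤ 2 for every j. -/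
/-- The matrix of the reduction, with structured index types. -/
def redMat {n m : ℕ} (C : Fin m → Finset (Fin n × Bool)) :
    (Fin m × Bool) ⊕ Fin n → (Fin n × Bool) ⊕ (Fin m × Bool) → ℕ
  | .inl (r, true), .inl p => if p ∈ C r then 1 else 0
  | .inl (r, true), .inr q => if q = (r, true) then 1 else 0
  | .inl (_, false), .inl _ => 0
  | .inl (r, false), .inr q => if q.1 = r then 1 else 0
  | .inr i, .inl p => if p.1 = i then 1 else 0
  | .inr _, .inr _ => 0

/-- The target vector. -/
def redVec {n m : ℕ} : (Fin m × Bool) ⊕ Fin n → ℕ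
  | .inl (_, true) => 3
  | .inl (_, false) => 2
  | .inr _ => 1

theorem redMat_le {n m : ℕ} (C : Fin m → Finset (Fin n × Bool)) (i) (j) :
    redMat C i j ≤ 1 := by
  rcases i with ⟨r, _ | _⟩ | i <;> rcases j with p | q <;> simp only [redMat] <;>
    (try split_ifs) <;> simp

theorem redVec_le {n m : ℕ} (i : (Fin m × Bool) ⊕ Fin n) : redVec i ≤ 3 := by
  rcases i with ⟨r, _ | _⟩ | i <;> simp [redVec]

theorem sum_fst_eq {k : ℕ} (f : Fin k × Bool → ℕ) (i : Fin k) :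
    ∑ p : Fin k × Bool, (if p.1 = i then 1 else 0) * f p = f (i, true) + f (i, false) := by
  rw [Fintype.sum_prod_type]
  simp

theorem red_iff {n m : ℕ} (C : Fin m → Finset (Fin n × Bool))
    (x : (Fin n × Bool) ⊕ (Fin m × Bool) → ℕ) :
    (∀ i, ∑ j, redMat C i j * x j = redVec i) ↔
      (∀ r, ∑ p ∈ C r, x (.inl p) + x (.inr (r, true)) = 3) ∧
      (∀ r, x (.inr (r, true)) + x (.inr (r, false)) = 2) ∧
      (∀ i, x (.inl (i, true)) + x (.inl (i, false)) = 1) := by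
  have h1 : ∀ r, ∑ j, redMat C (.inl (r, true)) j * x j
      = ∑ p ∈ C r, x (.inl p) + x (.inr (r, true)) := by
    intro r
    simp [Fintype.sum_sum_type, redMat]
  have h2 : ∀ r, ∑ j, redMat C (.inl (r, false)) j * x j
      = x (.inr (r, true)) + x (.inr (r, false)) := by
    intro r
    rw [Fintype.sum_sum_type]
    simp only [redMat, zero_mul, Finset.sum_const_zero, zero_add]
    exact sum_fst_eq (fun q => x (.inr q)) r
  have h3 : ∀ i, ∑ j, redMat C (.inr i) j * x j
      = x (.inl (i, true)) + x (.inl (i, false)) := by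
    intro i
    rw [Fintype.sum_sum_type]
    simp only [redMat, zero_mul, Finset.sum_const_zero, add_zero]
    exact sum_fst_eq (fun q => x (.inl q)) i
  constructor
  · intro h
    exact ⟨fun r => by rw [← h1]; exact h _, fun r => by rw [← h2]; exact h _,
      fun i => by rw [← h3]; exact h _⟩
  · rintro ⟨a, b, c⟩ (⟨r, _ | _⟩ | i)
    · rw [h2]; exact b r
    · rw [h1]; exact a r
    · rw [h3]; exact c i

theorem red_le {n m : ℕ} (C : Fin m → Finset (Fin n × Bool))
    (x : (Fin n × Bool) ⊕ (Fin m × Bool) → ℕ)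
    (h : ∀ i, ∑ j, redMat C i j * x j = redVec i) (j) : x j ≤ 2 := by
  obtain ⟨-, b, c⟩ := (red_iff C x).1 h
  rcases j with ⟨i, _ | _⟩ | ⟨r, _ | _⟩
  · have := c i; omega
  · have := c i; omega
  · have := b r; omega
  · have := b r; omega

theorem red_sat {n m : ℕ} (C : Fin m → Finset (Fin n × Bool))
    (h3 : ∀ r : Fin m, (C r).card = 3) :
    (∃ φ : Fin n → Bool, ∀ r : Fin m, ∃ p ∈ C r, φ p.1 = p.2) ↔
      ∃ x : (Fin n × Bool) ⊕ (Fin m × Bool) → ℕ,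
        ∀ i, ∑ j, redMat C i j * x j = redVec i := by
  simp only [red_iff]
  constructor
  · rintro ⟨φ, hφ⟩
    let k : Fin m → ℕ := fun r => ((C r).filter (fun p => φ p.1 = p.2)).card
    have hk3 : ∀ r, k r ≤ 3 := fun r => (Finset.card_filter_le _ _).trans (h3 r).le
    have hk1 : ∀ r, 1 ≤ k r := by
      intro r
      obtain ⟨p, hp, hpe⟩ := hφ r
      exact Finset.card_pos.2 ⟨p, Finset.mem_filter.2 ⟨hp, hpe⟩⟩
    refine ⟨Sum.elim (fun p => if φ p.1 = p.2 then 1 else 0)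
      (fun q => if q.2 then 3 - k q.1 else k q.1 - 1), ?_, ?_, ?_⟩
    · intro r
      have e : ∑ p ∈ C r, (if φ p.1 = p.2 then 1 else 0) = k r := by
        simp [k]
      have := hk3 r
      simp only [Sum.elim_inl, Sum.elim_inr, e, if_true]
      omega
    · intro r
      have := hk3 r
      have := hk1 r
      simp
      omega
    · intro i
      cases h : φ i <;> simp [h]
  · rintro ⟨x, a, b, c⟩
    refine ⟨fun i => decide (x (.inl (i, true)) = 1), fun r => ?_⟩
    by_contra! hne
    have hz : ∑ p ∈ C r, x (.inl p) = 0 := by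
      apply Finset.sum_eq_zero
      rintro ⟨i, s⟩ hp
      have h := hne _ hp
      have := c i
      cases s
      · simp at h; omega
      · simp at h; omega
    have := a r
    have := b r
    omega

/-- the reduction for Theorem 1.1 / `thm:ETHIP`:
For a 3-CNF formula `C` with `n` variables and `m` clauses (each clause consisting of
exactly 3 distinct literals), there is a 0/1 matrix `A` of dimension `(2m+n) × (2n+2m)`
and a target vector `b` with entries at most `3` such that the formula is satisfiable
iff `A x = b` has a non-negative integer solution, and moreover every non-negative
integer solution has all entries at most `2`. -/
theorem statement2 (n m : ℕ) (C : Fin m → Finset (Fin n × Bool))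
    (h3 : ∀ r : Fin m, (C r).card = 3) :
    ∃ (A : Fin (2 * m + n) → Fin (2 * n + 2 * m) → ℕ) (b : Fin (2 * m + n) → ℕ),
      (∀ i j, A i j ≤ 1) ∧
      (∀ i, b i ≤ 3) ∧
      ((∃ φ : Fin n → Bool, ∀ r : Fin m, ∃ p ∈ C r, φ p.1 = p.2) ↔
        (∃ x : Fin (2 * n + 2 * m) → ℕ,
          ∀ i, ∑ j : Fin (2 * n + 2 * m), A i j * x j = b i)) ∧
      (∀ x : Fin (2 * n + 2 * m) → ℕ,
        (∀ i, ∑ j : Fin (2 * n + 2 * m), A i j * x j = b i) → ∀ j, x j ≤ 2) := by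
  classical
  let eR : Fin (2 * m + n) ≃ (Fin m × Bool) ⊕ Fin n :=
    Fintype.equivOfCardEq (by simp [mul_comm])
  let eC : Fin (2 * n + 2 * m) ≃ (Fin n × Bool) ⊕ (Fin m × Bool) :=
    Fintype.equivOfCardEq (by simp [mul_comm])
  have key : ∀ x : Fin (2 * n + 2 * m) → ℕ,
      (∀ i, ∑ j, redMat C (eR i) (eC j) * x j = redVec (eR i)) ↔
      (∀ i, ∑ j, redMat C i j * x (eC.symm j) = redVec i) := by
    intro x
    rw [← eR.forall_congr_right (q := fun i => ∑ j, redMat C i j * x (eC.symm j) = redVec i)]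
    refine forall_congr' fun i => ?_
    rw [← eC.sum_comp]
    simp
  refine ⟨fun i j => redMat C (eR i) (eC j), fun i => redVec (eR i),
    fun i j => redMat_le C _ _, fun i => redVec_le _, ?_, ?_⟩
  · rw [red_sat C h3]
    constructor
    · rintro ⟨x, hx⟩
      refine ⟨fun j => x (eC j), (key _).2 ?_⟩
      simpa using hx
    · rintro ⟨x, hx⟩
      exact ⟨_, (key x).1 hx⟩
  · intro x hx j
    simpa using red_le C _ ((key x).1 hx) (eC j)
end

section
/- Let m, n, d be natural numbers, let A : Fin m → Fin n → ℕ be a matrix with A i j ≤ d for all i, j, and let X be a set of column indices of A (X ⊆ Fin n). Viewing the columns of A as vectors in Fin m → ℚ, let r(S) denote the ℚ-dimension (Module.finrank) of the span of the columns indexed by S, and set k = r(X) + r(Xᶜ) − r(Fin n) + 1 (this difference is a well-defined natural number since r(X) + r(Xᶜ) ≥ r(Fin n)). Then the set of vectors y : Fin m → ℕ satisfying y i ≤ d for all i and whose coercion to Fin m → ℚ lies in span(columns indexed by X) ⊓ span(columns indexed by Xᶜ) has cardinality at most (d+1)^{k−1}. -/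
theorem exists_coords {m : ℕ} (t : ℕ) : ∀ (V : Submodule ℚ (Fin m → ℚ)),
    Module.finrank ℚ V ≤ t →
    ∃ I : Finset (Fin m), I.card ≤ t ∧ ∀ v ∈ V, (∀ i ∈ I, v i = 0) → v = 0 := by
  induction t with
  | zero =>
    intro V hV
    refine ⟨∅, by simp, fun v hv _ => ?_⟩
    have h : V = ⊥ := Submodule.finrank_eq_zero.mp (by omega)
    rw [h] at hv
    simpa using hv
  | succ t ih =>
    intro V hV
    by_cases hb : V = ⊥
    · refine ⟨∅, by simp, fun v hv _ => ?_⟩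
      rw [hb] at hv
      simpa using hv
    · obtain ⟨v, hv, hv0⟩ := Submodule.exists_mem_ne_zero_of_ne_bot hb
      obtain ⟨i, hi⟩ := Function.ne_iff.mp hv0
      have hlt : V ⊓ LinearMap.ker (LinearMap.proj i : (Fin m → ℚ) →ₗ[ℚ] ℚ) < V := by
        refine lt_of_le_of_ne inf_le_left (fun h => hi ?_)
        rw [← h] at hv
        simpa using hv.2
      have hfr := Submodule.finrank_lt_finrank_of_lt hlt
      obtain ⟨I, hI, hI'⟩ := ih _ (Nat.le_of_lt_succ (hfr.trans_le hV))
      refine ⟨insert i I, (Finset.card_insert_le _ _).trans (by omega), fun w hw h => ?_⟩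
      refine hI' w ⟨hw, ?_⟩ (fun j hj => h j (Finset.mem_insert_of_mem hj))
      simpa using h i (Finset.mem_insert_self _ _)

theorem ncard_box_le {m : ℕ} (d : ℕ) (V : Submodule ℚ (Fin m → ℚ)) :
    Set.ncard {y : Fin m → ℕ | (∀ i, y i ≤ d) ∧ (fun i => (y i : ℚ)) ∈ V}
      ≤ (d + 1) ^ Module.finrank ℚ V := by
  obtain ⟨I, hI, hI'⟩ := exists_coords _ V le_rfl
  refine le_trans ?_ (Nat.pow_le_pow_right (Nat.succ_pos d) hI)
  have hc : (Set.univ : Set (I → Fin (d + 1))).ncard = (d + 1) ^ I.card := by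
    simp [Set.ncard_univ]
  rw [← hc]
  refine Set.ncard_le_ncard_of_injOn (fun y (i : I) => Fin.ofNat (d + 1) (y i))
    (fun _ _ => Set.mem_univ _) ?_ Set.finite_univ
  rintro y ⟨hy, hyV⟩ z ⟨hz, hzV⟩ h
  have h0 := hI' _ (V.sub_mem hyV hzV) (fun i hi => by
    have h1 := congrArg Fin.val (congrFun h ⟨i, hi⟩)
    simp only [Fin.ofNat, Nat.mod_eq_of_lt (Nat.lt_succ_of_le (hy i)),
      Nat.mod_eq_of_lt (Nat.lt_succ_of_le (hz i))] at h1
    simp [h1])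
  funext i
  have h2 := congrFun h0 i
  simp only [Pi.sub_apply, Pi.zero_apply, sub_eq_zero] at h2
  exact_mod_cast h2

/-- Cunningham–Geelen bound, Lemma 5.1 / `lemma:CGboundedpartialsoln`:
For a matrix `A` with entries in `{0,…,d}` and a set `X` of column indices, letting
`r S` be the ℚ-rank of the columns indexed by `S` and
`k = r X + r Xᶜ - r univ + 1` (the matroid connectivity `λ_{M(A)}(X)`), the number of
vectors `y ∈ {0,…,d}^m` lying in `span(A|X) ⊓ span(A|Xᶜ)` is at most `(d+1)^{k-1}`. -/
theorem statement3 (m n d : ℕ) (A : Fin m → Fin n → ℕ)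
    (hA : ∀ (i : Fin m) (j : Fin n), A i j ≤ d)
    (X : Set (Fin n))
    (r : Set (Fin n) → ℕ)
    (hr : ∀ S : Set (Fin n),
      r S = Module.finrank ℚ
        ↥(Submodule.span ℚ ((fun (j : Fin n) (i : Fin m) => (A i j : ℚ)) '' S)))
    (k : ℕ) (hk : k = r X + r Xᶜ - r Set.univ + 1) :
    Set.ncard {y : Fin m → ℕ | (∀ i, y i ≤ d) ∧
      (fun i => (y i : ℚ)) ∈
        Submodule.span ℚ ((fun (j : Fin n) (i : Fin m) => (A i j : ℚ)) '' X) ⊓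
        Submodule.span ℚ ((fun (j : Fin n) (i : Fin m) => (A i j : ℚ)) '' Xᶜ)}
      ≤ (d + 1) ^ (k - 1) := by
  refine (ncard_box_le d _).trans (Nat.pow_le_pow_right (Nat.succ_pos d) ?_)
  have h := Submodule.finrank_sup_add_finrank_inf_eq
    (Submodule.span ℚ ((fun (j : Fin n) (i : Fin m) => (A i j : ℚ)) '' X))
    (Submodule.span ℚ ((fun (j : Fin n) (i : Fin m) => (A i j : ℚ)) '' Xᶜ))
  rw [← Submodule.span_union, ← Set.image_union, Set.union_compl_self, ← hr, ← hr, ← hr] at h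
  omega
end

section
/- Let m be a natural number and let V₁, V₂ be sets of vectors in Fin m → ℚ. Let I = {q : Fin m | (∃ v ∈ V₁, v q ≠ 0) ∧ (∃ w ∈ V₂, w q ≠ 0)} be the set of coordinates at which both some vector of V₁ and some vector of V₂ are nonzero. Then Module.finrank ℚ (span ℚ V₁ ⊓ span ℚ V₂) ≤ |I| (the cardinality of I as a finite set). -/
theorem span_coord_zero (m : ℕ) (V : Set (Fin m → ℚ)) (q : Fin m)
    (h : ∀ v ∈ V, v q = 0) (x : Fin m → ℚ) (hx : x ∈ Submodule.span ℚ V) : x q = 0 := by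
  have : Submodule.span ℚ V ≤ LinearMap.ker (LinearMap.proj (R := ℚ) (φ := fun _ : Fin m => ℚ) q) :=
    Submodule.span_le.2 fun v hv => by simpa using h v hv
  simpa using this hx

/-- key linear-algebraic observation used to bound path-width:
For sets of vectors `V₁, V₂ ⊆ ℚ^m`, the dimension of `span V₁ ⊓ span V₂` is at most
the number of coordinates at which both some vector of `V₁` and some vector of `V₂`
are nonzero. -/
theorem statement5 (m : ℕ) (V₁ V₂ : Set (Fin m → ℚ)) :
    Module.finrank ℚ ↥(Submodule.span ℚ V₁ ⊓ Submodule.span ℚ V₂) ≤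
      Set.ncard {q : Fin m | (∃ v ∈ V₁, v q ≠ 0) ∧ (∃ w ∈ V₂, w q ≠ 0)} := by
  classical
  set I : Set (Fin m) := {q : Fin m | (∃ v ∈ V₁, v q ≠ 0) ∧ (∃ w ∈ V₂, w q ≠ 0)} with hI
  let f : ↥(Submodule.span ℚ V₁ ⊓ Submodule.span ℚ V₂) →ₗ[ℚ] (I → ℚ) :=
    (LinearMap.funLeft ℚ ℚ (Subtype.val : I → Fin m)).comp (Submodule.subtype _)
  have hf : Function.Injective f := by
    rw [injective_iff_map_eq_zero]
    rintro ⟨x, hx1, hx2⟩ h0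
    ext q
    change x q = 0
    by_cases hq : q ∈ I
    · exact congrFun h0 ⟨q, hq⟩
    · by_cases h1 : ∃ v ∈ V₁, v q ≠ 0
      · refine span_coord_zero m V₂ q (fun w hw => ?_) x hx2
        by_contra hne
        exact hq ⟨h1, w, hw, hne⟩
      · refine span_coord_zero m V₁ q (fun w hw => ?_) x hx1
        by_contra hne
        exact h1 ⟨w, hw, hne⟩
  have := LinearMap.finrank_le_finrank_of_injective hf
  rwa [Module.finrank_fintype_fun_eq_card, ← Nat.card_eq_fintype_card, Nat.card_coe_set_eq] at this
end

section
/- Let A : Fin m → Fin n → ℕ be a matrix with non-negative integer entries and columns w₁, …, w_n : Fin m → ℕ, let b : Fin m → ℕ, and set w_{n+1} = b (so w₁, …, w_{n+1} are the columns of A' = [A | b]). For X ⊆ Fin (n+1) define 𝓑(X) to be the set of y : Fin m → ℕ such that (1) y i ≤ b i for every i, (2) there exists z : Fin (n+1) → ℕ with z t = 0 for all t ∉ X and y = ∑_t z t • w_t, and (3) the coercion of y to Fin m → ℚ lies in span ℚ {w_t : t ∈ X} ⊓ span ℚ {w_t : t ∉ X}. Then for every j with 2 ≤ j ≤ n and every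 y : Fin m → ℕ: y ∈ 𝓑({1, …, j}) if and only if (a) there exist y₁ ∈ 𝓑({1, …, j−1}) and y₂ ∈ 𝓑({j}) with y = y₁ + y₂, (b) y i ≤ b i for every i, and (c) the coercion of y lies in span ℚ {w₁, …, w_j} ⊓ span ℚ {w_{j+1}, …, w_{n+1}}. -/
/-- The table of partial solutions `𝓑(X)` of the dynamic programming algorithm for the
instance `A x = b, x ≥ 0`: given the columns `w₁, …, w_{n+1}` of `A' = [A | b]` and a set
`X ⊆ Fin (n+1)` of column indices, `partialSolutions m n b w X` is the set of vectors
`y : Fin m → ℕ` such that (1) `y ≤ b` coordinatewise, (2) `y` is a non-negative integer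
combination of the columns indexed by `X`, and (3) the coercion of `y` to ℚ lies in
`span {w_t : t ∈ X} ⊓ span {w_t : t ∉ X}`. -/
def partialSolutions (m n : ℕ) (b : Fin m → ℕ) (w : Fin (n + 1) → Fin m → ℕ)
    (X : Set (Fin (n + 1))) : Set (Fin m → ℕ) :=
  {y | (∀ i, y i ≤ b i) ∧
    (∃ z : Fin (n + 1) → ℕ, (∀ t, t ∉ X → z t = 0) ∧ y = ∑ t, z t • w t) ∧
    (fun i => (y i : ℚ)) ∈
      Submodule.span ℚ ((fun (t : Fin (n + 1)) (i : Fin m) => (w t i : ℚ)) '' X) ⊓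
      Submodule.span ℚ ((fun (t : Fin (n + 1)) (i : Fin m) => (w t i : ℚ)) '' Xᶜ)}

/-- The coercion of a combination supported on `X` lies in the span of the columns in `X`. -/
theorem cast_sum_mem_span (m n : ℕ) (w : Fin (n + 1) → Fin m → ℕ) (X : Set (Fin (n + 1)))
    (z : Fin (n + 1) → ℕ) (hz : ∀ t, t ∉ X → z t = 0) :
    (fun i => (((∑ t, z t • w t) i : ℕ) : ℚ)) ∈
      Submodule.span ℚ ((fun (t : Fin (n + 1)) (i : Fin m) => (w t i : ℚ)) '' X) := by
  have h : (fun i => (((∑ t, z t • w t) i : ℕ) : ℚ)) =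
      ∑ t, (z t : ℚ) • (fun i : Fin m => (w t i : ℚ)) := by
    funext i
    simp [Finset.sum_apply]
  rw [h]
  refine Submodule.sum_mem _ fun t _ => ?_
  by_cases ht : t ∈ X
  · exact Submodule.smul_mem _ _ (Submodule.subset_span ⟨t, ht, rfl⟩)
  · simp [hz t ht]

/-- correctness of the dynamic-programming recurrence in the proof of
Theorem 1.3 / `thmCGlin`: with `w₁, …, w_n` the columns of the non-negative matrix `A`
and `w_{n+1} = b`, for every `2 ≤ j ≤ n`, a vector `y` belongs to `𝓑({1,…,j})` iff
(a) `y = y₁ + y₂` for some `y₁ ∈ 𝓑({1,…,j-1})` and `y₂ ∈ 𝓑({j})`, (b) `y ≤ b`, and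
(c) the coercion of `y` lies in `span {w₁,…,w_j} ⊓ span {w_{j+1},…,w_{n+1}}`. -/
theorem statement7 (m n : ℕ) (A : Fin m → Fin n → ℕ) (b : Fin m → ℕ)
    (w : Fin (n + 1) → Fin m → ℕ)
    (hwA : ∀ (j : Fin n) (i : Fin m), w j.castSucc i = A i j)
    (hwb : w (Fin.last n) = b) :
    ∀ j : ℕ, 2 ≤ j → j ≤ n → ∀ y : Fin m → ℕ,
      y ∈ partialSolutions m n b w {t : Fin (n + 1) | (t : ℕ) < j} ↔
        ((∃ y₁ ∈ partialSolutions m n b w {t : Fin (n + 1) | (t : ℕ) < j - 1},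
            ∃ y₂ ∈ partialSolutions m n b w {t : Fin (n + 1) | (t : ℕ) = j - 1},
              y = y₁ + y₂) ∧
          (∀ i, y i ≤ b i) ∧
          (fun i => (y i : ℚ)) ∈
            Submodule.span ℚ
              ((fun (t : Fin (n + 1)) (i : Fin m) => (w t i : ℚ)) ''
                {t : Fin (n + 1) | (t : ℕ) < j}) ⊓
            Submodule.span ℚ
              ((fun (t : Fin (n + 1)) (i : Fin m) => (w t i : ℚ)) ''
                {t : Fin (n + 1) | j ≤ (t : ℕ)})) := by
  intro j hj hjn y
  have hc : {t : Fin (n + 1) | (t : ℕ) < j}ᶜ = {t : Fin (n + 1) | j ≤ (t : ℕ)} := by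
    ext t; simp
  constructor
  · rintro ⟨hb, ⟨z, hz, hy⟩, hs⟩
    rw [hc] at hs
    refine ⟨?_, hb, hs⟩
    have hz1 : ∀ t : Fin (n + 1), t ∉ {t : Fin (n + 1) | (t : ℕ) < j - 1} →
        (if (t : ℕ) < j - 1 then z t else 0) = 0 := fun t ht => if_neg ht
    have hz2 : ∀ t : Fin (n + 1), t ∉ {t : Fin (n + 1) | (t : ℕ) = j - 1} →
        (if (t : ℕ) = j - 1 then z t else 0) = 0 := fun t ht => if_neg ht
    have h1 := cast_sum_mem_span m n w _ _ hz1
    have h2 := cast_sum_mem_span m n w _ _ hz2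
    have hsum : y = (∑ t : Fin (n + 1), (if (t : ℕ) < j - 1 then z t else 0) • w t) +
        ∑ t : Fin (n + 1), (if (t : ℕ) = j - 1 then z t else 0) • w t := by
      rw [hy, ← Finset.sum_add_distrib]
      refine Finset.sum_congr rfl fun t _ => ?_
      rw [← add_smul]
      congr 1
      have := hz t
      simp only [Set.mem_setOf_eq] at this
      split_ifs <;> first | omega | (have := this (by omega); omega)
    obtain ⟨y₁, e1⟩ : ∃ y₁, y₁ =
      ∑ t : Fin (n + 1), (if (t : ℕ) < j - 1 then z t else 0) • w t := ⟨_, rfl⟩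
    obtain ⟨y₂, e2⟩ : ∃ y₂, y₂ =
      ∑ t : Fin (n + 1), (if (t : ℕ) = j - 1 then z t else 0) • w t := ⟨_, rfl⟩
    rw [← e1] at h1 hsum
    rw [← e2] at h2 hsum
    have d1 : (fun i => (y₁ i : ℚ)) = (fun i => (y i : ℚ)) - (fun i => (y₂ i : ℚ)) := by
      funext i; simp [hsum]
    have d2 : (fun i => (y₂ i : ℚ)) = (fun i => (y i : ℚ)) - (fun i => (y₁ i : ℚ)) := by
      funext i; simp [hsum]
    have hbi : ∀ i, y₁ i + y₂ i ≤ b i := fun i => by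
      have := hb i
      rw [hsum] at this
      exact this
    refine ⟨y₁, ⟨fun i => ?_, ⟨_, hz1, e1⟩, h1, ?_⟩, y₂, ⟨fun i => ?_, ⟨_, hz2, e2⟩, h2, ?_⟩, hsum⟩
    · have := hbi i; omega
    · rw [d1]
      refine Submodule.sub_mem _
        (Submodule.span_mono (Set.image_mono ?_) hs.2)
        (Submodule.span_mono (Set.image_mono ?_) h2)
      all_goals
        intro t ht
        simp only [Set.mem_setOf_eq, Set.mem_compl_iff] at ht ⊢
        omega
    · have := hbi i; omega
    · rw [d2]
      refine Submodule.sub_mem _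
        (Submodule.span_mono (Set.image_mono ?_) hs.2)
        (Submodule.span_mono (Set.image_mono ?_) h1)
      all_goals
        intro t ht
        simp only [Set.mem_setOf_eq, Set.mem_compl_iff] at ht ⊢
        omega
  · rintro ⟨⟨y₁, ⟨_, ⟨z₁, hz₁, hy₁⟩, _⟩, y₂, ⟨_, ⟨z₂, hz₂, hy₂⟩, _⟩, hy⟩, hb, hs⟩
    refine ⟨hb, ⟨z₁ + z₂, ?_, ?_⟩, ?_⟩
    · intro t ht
      simp only [Set.mem_setOf_eq] at ht hz₁ hz₂
      simp [hz₁ t (by omega), hz₂ t (by omega)]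
    · rw [hy, hy₁, hy₂, ← Finset.sum_add_distrib]
      exact Finset.sum_congr rfl fun t _ => (add_smul _ _ _).symm
    · rw [hc]; exact hs
end

section
/- Let d ≥ 1 and k ≥ 1, let A : Fin m → Fin n → ℕ be a matrix with all entries at most d and columns w₁, …, w_n, and let b : Fin m → ℕ with all entries at most d; set w_{n+1} = b. Suppose that for every i with 1 ≤ i ≤ n−1, Module.finrank ℚ (span ℚ {w₁, …, w_i} ⊓ span ℚ {w_{i+1}, …, w_n}) ≤ k − 1 (columns regarded as vectors in Fin m → ℚ). For X ⊆ Fin (n+1) let 𝓑(X) be the set of y : Fin m → ℕ such that y i ≤ b i for every i, y = ∑_t z t • w_t for some z : Fin (n+1) → ℕ vanishing outside X, and the coercion of y lies in span ℚ {w_t : t ∈ X} ⊓ span ℚ {w_t : t ∉ X}. Then for every j with 1 ≤ j ≤ n, the set 𝓑({1, …, j}) has cardinality at most (d+1)^k. -/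
theorem aux_finrank {m : ℕ} (U V : Submodule ℚ (Fin m → ℚ)) (x : Fin m → ℚ) :
    Module.finrank ℚ ↥(U ⊓ (V ⊔ Submodule.span ℚ {x})) ≤ Module.finrank ℚ ↥(U ⊓ V) + 1 := by
  have h1 := Submodule.finrank_sup_add_finrank_inf_eq (U ⊓ (V ⊔ Submodule.span ℚ {x})) V
  have h2 : Module.finrank ℚ ↥((U ⊓ (V ⊔ Submodule.span ℚ {x})) ⊔ V) ≤
      Module.finrank ℚ ↥(V ⊔ Submodule.span ℚ {x}) :=
    Submodule.finrank_mono (sup_le inf_le_right le_sup_left)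
  have h3 : Module.finrank ℚ ↥((U ⊓ (V ⊔ Submodule.span ℚ {x})) ⊓ V) ≤
      Module.finrank ℚ ↥(U ⊓ V) :=
    Submodule.finrank_mono (inf_le_inf_right _ inf_le_left)
  have h4 := Submodule.finrank_add_le_finrank_add_finrank V (Submodule.span ℚ {x})
  have h5 : Module.finrank ℚ ↥(Submodule.span ℚ {x}) ≤ 1 := by
    simpa using finrank_span_le_card (R := ℚ) ({x} : Set (Fin m → ℚ))
  omega

theorem aux_count {m d : ℕ} (W : Submodule ℚ (Fin m → ℚ)) (S : Set (Fin m → ℕ))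
    (hS : ∀ y ∈ S, (∀ i, y i ≤ d) ∧ (fun i => (y i : ℚ)) ∈ W) :
    S.ncard ≤ (d + 1) ^ Module.finrank ℚ W := by
  classical
  let v : Fin m → Module.Dual ℚ W := fun i => (LinearMap.proj i).comp W.subtype
  obtain ⟨κ, a, ha, hspan, hli⟩ := exists_linearIndependent' ℚ v
  have : Finite κ := Finite.of_injective a ha
  have := Fintype.ofFinite κ
  have hc : Fintype.card κ ≤ Module.finrank ℚ W := by
    have := hli.fintype_card_le_finrank
    rwa [Subspace.dual_finrank_eq] at this
  have key : ∀ u : W, (∀ c, v (a c) u = 0) → ∀ i, v i u = 0 := by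
    intro u hu i
    have hle : Submodule.span ℚ (Set.range (v ∘ a)) ≤ LinearMap.ker (Module.Dual.eval ℚ W u) := by
      rw [Submodule.span_le]
      rintro _ ⟨c, rfl⟩
      exact hu c
    have : v i ∈ Submodule.span ℚ (Set.range (v ∘ a)) := by
      rw [hspan]; exact Submodule.subset_span ⟨i, rfl⟩
    exact hle this
  let f : S → (κ → Fin (d + 1)) := fun y c => ⟨y.1 (a c), Nat.lt_succ_of_le ((hS y.1 y.2).1 _)⟩
  have hf : Function.Injective f := by
    intro y y' h
    have hk := key (⟨_, (hS y.1 y.2).2⟩ - ⟨_, (hS y'.1 y'.2).2⟩) (by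
      intro c
      have : y.1 (a c) = y'.1 (a c) := congrArg Fin.val (congrFun h c)
      simp [v, this])
    apply Subtype.ext
    funext i
    have := hk i
    simp only [v, LinearMap.comp_apply, map_sub, Submodule.subtype_apply, LinearMap.proj_apply,
      sub_eq_zero] at this
    exact_mod_cast this
  calc S.ncard = Nat.card S := rfl
    _ ≤ Nat.card (κ → Fin (d + 1)) := Nat.card_le_card_of_injective f hf
    _ = (d + 1) ^ Fintype.card κ := by simp
    _ ≤ _ := Nat.pow_le_pow_right (by omega) hc

/-- size bound on the dynamic-programming tables in the proof of
Theorem 1.3 / `thmCGlin`: if all entries of `A` and of `b` are at most `d`, and the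
identity ordering of the columns `w₁, …, w_n` of `A` witnesses that the path-width of
the column matroid of `A` is at most `k` (every ordered cut has intersection dimension
at most `k - 1`), then each table `𝓑({1,…,j})`, `1 ≤ j ≤ n`, has at most `(d+1)^k`
elements. -/
theorem statement8 (m n d k : ℕ) (hd : 1 ≤ d) (hk : 1 ≤ k)
    (A : Fin m → Fin n → ℕ) (hA : ∀ (i : Fin m) (j : Fin n), A i j ≤ d)
    (b : Fin m → ℕ) (hb : ∀ i, b i ≤ d)
    (w : Fin (n + 1) → Fin m → ℕ)
    (hwA : ∀ (j : Fin n) (i : Fin m), w j.castSucc i = A i j)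
    (hwb : w (Fin.last n) = b)
    (hcut : ∀ i : ℕ, 1 ≤ i → i ≤ n - 1 →
      Module.finrank ℚ
        ↥(Submodule.span ℚ
            ((fun (t : Fin (n + 1)) (i' : Fin m) => (w t i' : ℚ)) ''
              {t : Fin (n + 1) | (t : ℕ) < i}) ⊓
          Submodule.span ℚ
            ((fun (t : Fin (n + 1)) (i' : Fin m) => (w t i' : ℚ)) ''
              {t : Fin (n + 1) | i ≤ (t : ℕ) ∧ (t : ℕ) < n})) ≤ k - 1) :
    ∀ j : ℕ, 1 ≤ j → j ≤ n →
      Set.ncard (partialSolutions m n b w {t : Fin (n + 1) | (t : ℕ) < j})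
        ≤ (d + 1) ^ k := by
  intro j hj hjn
  let g : Fin (n + 1) → Fin m → ℚ := fun t i => (w t i : ℚ)
  let U := Submodule.span ℚ (g '' {t | (t : ℕ) < j})
  let V := Submodule.span ℚ (g '' {t | j ≤ (t : ℕ) ∧ (t : ℕ) < n})
  have hUV : Module.finrank ℚ ↥(U ⊓ V) ≤ k - 1 := by
    by_cases h : j ≤ n - 1
    · exact hcut j hj h
    · have hV : V = ⊥ := by
        have : {t : Fin (n + 1) | j ≤ (t : ℕ) ∧ (t : ℕ) < n} = ∅ := by
          ext t
          simp only [Set.mem_ofPred_eq, Set.mem_empty_iff_false, iff_false]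
          omega
        simp only [V, this, Set.image_empty, Submodule.span_empty]
      rw [hV, inf_bot_eq, finrank_bot]
      exact Nat.zero_le _
  have hW := aux_finrank U V (g (Fin.last n))
  refine (aux_count (d := d) (U ⊓ (V ⊔ Submodule.span ℚ {g (Fin.last n)})) _ ?_).trans
    (Nat.pow_le_pow_right (by omega) (by omega))
  rintro y ⟨hy, -, hm⟩
  refine ⟨fun i => (hy i).trans (hb i), hm.1, ?_⟩
  have h2 := hm.2
  refine (Submodule.span_le.2 ?_) h2
  rintro _ ⟨t, ht, rfl⟩
  simp only [Set.mem_compl_iff, Set.mem_ofPred_eq, not_lt] at ht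
  by_cases htn : (t : ℕ) < n
  · exact Submodule.mem_sup_left (Submodule.subset_span ⟨t, ⟨ht, htn⟩, rfl⟩)
  · have : t = Fin.last n := Fin.ext (by simp; omega)
    subst this
    exact Submodule.mem_sup_right (Submodule.subset_span rfl)
end

section
/- Let d be a natural number, let A : Fin m → Fin n → ℕ have columns w₁, …, w_n, and let b : Fin m → ℕ with all entries at most d; set w_{n+1} = b. For X ⊆ Fin (n+1) let 𝓑(X) be the set of y : Fin m → ℕ such that y i ≤ b i for every i, y = ∑_t z t • w_t for some z : Fin (n+1) → ℕ vanishing outside X, and the coercion of y lies in span ℚ {w_t : t ∈ X} ⊓ span ℚ {w_t : t ∉ X}. Then for every t : Fin (n+1), 𝓑({t}) ⊆ {a • w_t : a ∈ ℕ, a ≤ d}, and consequently 𝓑({t}) has cardinality at most d + 1. -/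
/-- initialization of the dynamic programming in the proof of
Theorem 1.3 / `thmCGlin`: if all entries of `b` are at most `d`, then for every column
index `t` of `A' = [A | b]`, the singleton table `𝓑({t})` is contained in the set of
multiples `a • w_t` with `a ≤ d`, and consequently has at most `d + 1` elements. -/
theorem statement9 (m n d : ℕ) (A : Fin m → Fin n → ℕ)
    (b : Fin m → ℕ) (hb : ∀ i, b i ≤ d)
    (w : Fin (n + 1) → Fin m → ℕ)
    (hwA : ∀ (j : Fin n) (i : Fin m), w j.castSucc i = A i j)
    (hwb : w (Fin.last n) = b) :
    ∀ t : Fin (n + 1),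
      partialSolutions m n b w {t} ⊆ {y : Fin m → ℕ | ∃ a : ℕ, a ≤ d ∧ y = a • w t} ∧
      Set.ncard (partialSolutions m n b w {t}) ≤ d + 1 := by
  intro t
  have key : partialSolutions m n b w {t} ⊆
      {y : Fin m → ℕ | ∃ a : ℕ, a ≤ d ∧ y = a • w t} := by
    rintro y ⟨hy, ⟨z, hz, hyz⟩, -⟩
    have hy1 : y = z t • w t := by
      rw [hyz]
      apply Finset.sum_eq_single t
      · intro s _ hs
        rw [hz s (by simpa using hs), zero_smul]
      · intro h
        exact absurd (Finset.mem_univ t) h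
    by_cases h0 : w t = 0
    · exact ⟨0, Nat.zero_le _, by rw [hy1, h0]; simp⟩
    · obtain ⟨i, hi⟩ := Function.ne_iff.mp h0
      refine ⟨z t, ?_, hy1⟩
      have h1 : z t * w t i ≤ b i := by
        have h2 := hy i
        rw [hy1] at h2
        simpa using h2
      have hpos : 0 < w t i := Nat.pos_of_ne_zero hi
      exact (Nat.le_mul_of_pos_right _ hpos).trans (h1.trans (hb i))
  refine ⟨key, ?_⟩
  have hsub : partialSolutions m n b w {t} ⊆
      (((Finset.range (d + 1)).image (fun a : ℕ => a • w t) : Finset (Fin m → ℕ)) :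
        Set (Fin m → ℕ)) := by
    intro y hy
    obtain ⟨a, ha, rfl⟩ := key hy
    exact Finset.mem_coe.mpr
      (Finset.mem_image.mpr ⟨a, Finset.mem_range.mpr (Nat.lt_succ_of_le ha), rfl⟩)
  refine (Set.ncard_le_ncard hsub (Finset.finite_toSet _)).trans ?_
  rw [Set.ncard_coe_finset]
  exact Finset.card_image_le.trans (by simp)
end
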